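/- Let N ≥ 5 be an integer, Ω ⊂ ℝ^N a nonempty bounded open set, x₀ ∈ Ω, and a, b : ℝ^N → ℝ continuous functions positive on the closure of Ω with a(x₀) = b(x₀) = γ₀ and γ₀ = min_{x∈Ω̄} a(x) = min_{x∈Ω̄} b(x). Suppose a admits the expansion of order k at x₀ with coefficient A_k > 0 and b admits the expansion of order l at x₀ with coefficient B_l > 0, where k = 2 and l = 2. Set m_N := N(N−2)(N+2)/(8(N−1)). Then for every λ > m_N (A₂ + B₂) there exist smooth functions u, v compactly supported in Ω with ‖u‖_{L^q(Ω)} = ‖v‖_{L^q(Ω)} = 1 such that F_λ(u,v) < γ₀ S. -/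

import Mathlib

open MeasureTheory Real Filter Topology

noncomputable section

/-! Test the functional with `u = v`, the Aubin–Talenti bubble
`U y = (1 + ‖y‖ ^ 2) ^ (-(n - 2) / 2)` concentrated at `x₀` at scale `ε` and cut off near `x₀`.
In the variable `y = (x - x₀) / ε`, dominated convergence expands every term up to `o(ε ^ 2)`: the
cutoff is not seen at this order because the moments involved still converge, which is where
`n > 4` enters. The leading terms reproduce the Sobolev quotient of `U`, and what remains is
`ε ^ 2` times `(A + B) / 2 * ∫ ‖y‖ ^ 2 ‖∇U‖ ^ 2 - λ * ∫ U ^ 2`. Integration by parts in the radial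
variable relates the two integrals, and the coefficient is negative exactly when `λ` exceeds
`n (n - 2) (n + 2) / (8 (n - 1)) * (A + B)`. -/

section

open Module Asymptotics Set

section Moments

variable {E : Type*} [NormedAddCommGroup E] [MeasurableSpace E]

/-- The radial moment `∫ ‖y‖ ^ p (1 + ‖y‖ ^ 2) ^ (-s)`, in terms of which all the constants of the
problem are expressed. For a Haar measure on a nontrivial `E` it is the junk value `0` unless
`p + dim E < 2 * s`. -/
def bubbleMoment (μ : Measure E) (p : ℕ) (s : ℝ) : ℝ :=
  ∫ y, ‖y‖ ^ p * (1 + ‖y‖ ^ 2) ^ (-s) ∂μ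

lemma norm_pow_le_one_add_norm_sq_rpow {F : Type*} [SeminormedAddGroup F] (y : F) (p : ℕ) :
    ‖y‖ ^ p ≤ (1 + ‖y‖ ^ 2) ^ ((p : ℝ) / 2) := by
  calc ‖y‖ ^ p = (‖y‖ ^ 2) ^ ((p : ℝ) / 2) := by
        rw [← rpow_natCast_mul (norm_nonneg y), ← rpow_natCast]
        congr 1
        push_cast
        ring
    _ ≤ (1 + ‖y‖ ^ 2) ^ ((p : ℝ) / 2) := by
        gcongr
        linarith

lemma continuous_one_add_norm_sq_rpow {F : Type*} [SeminormedAddGroup F] (s : ℝ) :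
    Continuous fun y : F => (1 + ‖y‖ ^ 2) ^ s :=
  (by fun_prop : Continuous fun y : F => 1 + ‖y‖ ^ 2).rpow_const fun y => .inl (by positivity)

variable [NormedSpace ℝ E] [FiniteDimensional ℝ E] [BorelSpace E] (μ : Measure E)
  [μ.IsAddHaarMeasure]

lemma integrable_norm_pow_mul_one_add_norm_sq_rpow_neg {p : ℕ} {s : ℝ}
    (h : p + finrank ℝ E < 2 * s) :
    Integrable (fun y : E => ‖y‖ ^ p * (1 + ‖y‖ ^ 2) ^ (-s)) μ := by
  have hdecay : Integrable (fun y : E => (1 + ‖y‖ ^ 2) ^ (-(2 * s - p) / 2)) μ :=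
    integrable_rpow_neg_one_add_norm_sq (by linarith)
  refine hdecay.mono'
    ((continuous_norm.pow p).mul (continuous_one_add_norm_sq_rpow _)).aestronglyMeasurable
    (.of_forall fun y => ?_)
  rw [norm_of_nonneg (by positivity)]
  calc ‖y‖ ^ p * (1 + ‖y‖ ^ 2) ^ (-s)
      ≤ (1 + ‖y‖ ^ 2) ^ ((p : ℝ) / 2) * (1 + ‖y‖ ^ 2) ^ (-s) := by
        gcongr
        exact norm_pow_le_one_add_norm_sq_rpow y p
    _ = (1 + ‖y‖ ^ 2) ^ (-(2 * s - p) / 2) := by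
        rw [← rpow_add (by positivity)]
        congr 1
        ring

lemma integrable_one_add_norm_sq_rpow_neg {s : ℝ} (h : finrank ℝ E < 2 * s) :
    Integrable (fun y : E => (1 + ‖y‖ ^ 2) ^ (-s)) μ := by
  simpa using integrable_norm_pow_mul_one_add_norm_sq_rpow_neg μ (p := 0) (by simpa using h)

lemma bubbleMoment_zero_pos {s : ℝ} (h : finrank ℝ E < 2 * s) : 0 < bubbleMoment μ 0 s := by
  simp only [bubbleMoment, pow_zero, one_mul]
  exact integral_pos_of_integrable_nonneg_nonzero (x := 0) (continuous_one_add_norm_sq_rpow _)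
    (integrable_one_add_norm_sq_rpow_neg μ h) (fun y => by positivity) (by simp)

lemma hasDerivAt_pow_mul_one_add_sq_rpow_neg (m : ℕ) (s r : ℝ) :
    HasDerivAt (fun r : ℝ => r ^ (m + 1) * (1 + r ^ 2) ^ (-s))
      ((m + 1) * (r ^ m * (1 + r ^ 2) ^ (-s))
        - 2 * s * (r ^ (m + 2) * (1 + r ^ 2) ^ (-(s + 1)))) r := by
  have hbase : HasDerivAt (fun r : ℝ => 1 + r ^ 2) (2 * r) r := by
    simpa using (hasDerivAt_pow 2 r).const_add 1
  have hpow : HasDerivAt (fun r : ℝ => r ^ (m + 1)) ((m + 1) * r ^ m) r := by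
    simpa using hasDerivAt_pow (m + 1) r
  refine (hpow.fun_mul (hbase.rpow_const (p := -s) (.inl (by positivity)))).congr_deriv ?_
  rw [show -(s + 1) = -s - 1 by ring]
  ring

lemma tendsto_pow_mul_one_add_sq_rpow_neg_atTop {m : ℕ} {s : ℝ} (h : m < 2 * s) :
    Tendsto (fun r : ℝ => r ^ m * (1 + r ^ 2) ^ (-s)) atTop (𝓝 0) := by
  have hlim : Tendsto (fun r : ℝ => r ^ (-(2 * s - m))) atTop (𝓝 0) :=
    tendsto_rpow_neg_atTop (by linarith)
  have hs : 0 ≤ s := by linarith [m.cast_nonneg (α := ℝ)]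
  refine squeeze_zero' ?_ ?_ hlim
  · filter_upwards [eventually_ge_atTop 0] with r hr
    positivity
  · filter_upwards [eventually_gt_atTop 0] with r hr
    calc r ^ m * (1 + r ^ 2) ^ (-s) ≤ r ^ m * (r ^ 2) ^ (-s) := by
          gcongr r ^ m * ?_
          exact rpow_le_rpow_of_nonpos (by positivity) (by linarith) (neg_nonpos.2 hs)
      _ = r ^ (-(2 * s - m)) := by
          rw [← rpow_natCast_mul hr.le, ← rpow_natCast, ← rpow_add hr]
          congr 1
          push_cast
          ring

lemma bubbleMoment_eq_smul_integral_Ioi [Nontrivial E] {m p : ℕ}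
    (hm : m + 1 = finrank ℝ E + p) (s : ℝ) :
    bubbleMoment μ p s = finrank ℝ E • μ.real (Metric.ball 0 1) •
      ∫ r in Ioi (0 : ℝ), r ^ m * (1 + r ^ 2) ^ (-s) := by
  have hn : 0 < finrank ℝ E := finrank_pos
  rw [bubbleMoment, integral_fun_norm_addHaar μ fun r => r ^ p * (1 + r ^ 2) ^ (-s)]
  simp only [smul_eq_mul, ← mul_assoc, ← pow_add, show finrank ℝ E - 1 + p = m by omega]

lemma integrableOn_Ioi_pow_mul_one_add_sq_rpow_neg {m : ℕ} {s : ℝ} (h : m + 1 < 2 * s) :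
    IntegrableOn (fun r : ℝ => r ^ m * (1 + r ^ 2) ^ (-s)) (Ioi 0) := by
  simpa using (integrable_fun_norm_addHaar (volume : Measure ℝ)
    (f := fun r => r ^ m * (1 + r ^ 2) ^ (-s))).1
      (integrable_norm_pow_mul_one_add_norm_sq_rpow_neg volume (by simpa using h))

lemma two_mul_mul_integral_Ioi_pow_mul_one_add_sq_rpow_neg {m : ℕ} {s : ℝ} (h : m + 1 < 2 * s) :
    2 * s * ∫ r in Ioi (0 : ℝ), r ^ (m + 2) * (1 + r ^ 2) ^ (-(s + 1)) =
      (m + 1) * ∫ r in Ioi (0 : ℝ), r ^ m * (1 + r ^ 2) ^ (-s) := by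
  have hlow := (integrableOn_Ioi_pow_mul_one_add_sq_rpow_neg h).const_mul ((m : ℝ) + 1)
  have hhigh := (integrableOn_Ioi_pow_mul_one_add_sq_rpow_neg (m := m + 2) (s := s + 1)
    (by push_cast; linarith)).const_mul (2 * s)
  have hftc := integral_Ioi_of_hasDerivAt_of_tendsto'
    (fun r _ => hasDerivAt_pow_mul_one_add_sq_rpow_neg m s r) (hlow.sub hhigh)
    (tendsto_pow_mul_one_add_sq_rpow_neg_atTop (by push_cast; exact h))
  rw [integral_sub hlow hhigh, integral_const_mul, integral_const_mul] at hftc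
  simp only [ne_eq, Nat.add_eq_zero_iff, one_ne_zero, and_false, not_false_eq_true, zero_pow,
    zero_mul, sub_zero] at hftc
  linarith

lemma two_mul_mul_bubbleMoment_add_two [Nontrivial E] {p : ℕ} {s : ℝ}
    (h : p + finrank ℝ E < 2 * s) :
    2 * s * bubbleMoment μ (p + 2) (s + 1) = (finrank ℝ E + p) * bubbleMoment μ p s := by
  obtain ⟨m, hm⟩ : ∃ m, m + 1 = finrank ℝ E + p :=
    ⟨_, Nat.sub_add_cancel (Nat.add_pos_left finrank_pos p)⟩
  have hm' : (m : ℝ) + 1 = finrank ℝ E + p := mod_cast hm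
  have hrec := two_mul_mul_integral_Ioi_pow_mul_one_add_sq_rpow_neg (m := m) (s := s) (by linarith)
  rw [bubbleMoment_eq_smul_integral_Ioi μ hm,
    bubbleMoment_eq_smul_integral_Ioi μ (m := m + 2) (by omega), nsmul_eq_mul,
    nsmul_eq_mul, smul_eq_mul, smul_eq_mul, ← hm']
  linear_combination (finrank ℝ E : ℝ) * μ.real (Metric.ball 0 1) * hrec

lemma four_mul_bubbleMoment_four_finrank (h : 4 < finrank ℝ E) :
    4 * (finrank ℝ E - 1) * (finrank ℝ E - 2) * bubbleMoment μ 4 (finrank ℝ E) =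
      finrank ℝ E * (finrank ℝ E + 2) * bubbleMoment μ 0 (finrank ℝ E - 2) := by
  have : Nontrivial E := nontrivial_of_finrank_pos (R := ℝ) (by omega)
  have h' : (4 : ℝ) < finrank ℝ E := mod_cast h
  have hfour := two_mul_mul_bubbleMoment_add_two μ (p := 2) (s := finrank ℝ E - 1)
    (by push_cast; linarith)
  have htwo := two_mul_mul_bubbleMoment_add_two μ (p := 0) (s := finrank ℝ E - 2)
    (by push_cast; linarith)
  rw [sub_add_cancel] at hfour
  rw [show (finrank ℝ E : ℝ) - 2 + 1 = finrank ℝ E - 1 by ring] at htwo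
  push_cast at hfour htwo
  linear_combination 2 * ((finrank ℝ E : ℝ) - 2) * hfour + ((finrank ℝ E : ℝ) + 2) * htwo

end Moments

section Truncation

variable {E : Type*} [NormedAddCommGroup E]

/-- `a` admits the expansion of order `k` at `x₀` with coefficient `A`:
`a x = a x₀ + A ‖x - x₀‖ ^ k + o(‖x - x₀‖ ^ k)`. -/
def HasRadialExpansionAt (a : E → ℝ) (x₀ : E) (k : ℕ) (A : ℝ) : Prop :=
  (fun x => a x - a x₀ - A * ‖x - x₀‖ ^ k) =o[𝓝 x₀] fun x => ‖x - x₀‖ ^ k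

lemma hasRadialExpansionAt_of_tendsto {a : E → ℝ} {x₀ : E} {k : ℕ} {A : ℝ} (hk : k ≠ 0)
    (h : Tendsto (fun x => (a x - a x₀ - A * ‖x - x₀‖ ^ k) / ‖x - x₀‖ ^ k) (𝓝[≠] x₀) (𝓝 0)) :
    HasRadialExpansionAt a x₀ k A := by
  have hne : (fun x => a x - a x₀ - A * ‖x - x₀‖ ^ k) =o[𝓝[≠] x₀] fun x => ‖x - x₀‖ ^ k := by
    refine (isLittleO_iff_tendsto' ?_).2 h
    filter_upwards [self_mem_nhdsWithin] with x hx hzero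
    exact absurd hzero (pow_ne_zero _ (norm_ne_zero_iff.2 (sub_ne_zero.2 hx)))
  simpa [HasRadialExpansionAt] using hne.insert (by simp [hk])

lemma HasRadialExpansionAt.isBigO_sub {a : E → ℝ} {x₀ : E} {k : ℕ} {A : ℝ}
    (h : HasRadialExpansionAt a x₀ k A) :
    (fun x => a x - a x₀) =O[𝓝 x₀] fun x => ‖x - x₀‖ ^ k := by
  simpa using
    (IsLittleO.isBigO h).add ((isBigO_refl (fun x => ‖x - x₀‖ ^ k) (𝓝 x₀)).const_mul_left A)

lemma HasRadialExpansionAt.tendsto_rescale [NormedSpace ℝ E] {a : E → ℝ} {x₀ : E} {k : ℕ} {A : ℝ}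
    (h : HasRadialExpansionAt a x₀ k A) (y : E) :
    Tendsto (fun ε : ℝ => (a (x₀ + ε • y) - a x₀) / ε ^ k) (𝓝[>] 0) (𝓝 (A * ‖y‖ ^ k)) := by
  have hray : Tendsto (fun ε : ℝ => x₀ + ε • y) (𝓝[>] 0) (𝓝 x₀) :=
    ((by fun_prop : Continuous fun ε : ℝ => x₀ + ε • y).tendsto' 0 x₀ (by simp)).mono_left
      nhdsWithin_le_nhds
  have hnorm : (fun ε : ℝ => ‖ε • y‖ ^ k) =O[𝓝[>] 0] fun ε : ℝ => ε ^ k :=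
    .of_bound (‖y‖ ^ k) <| .of_forall fun ε => by
      simp [norm_smul, mul_pow, mul_comm]
  have hsmall : (fun ε : ℝ => a (x₀ + ε • y) - a x₀ - A * ‖ε • y‖ ^ k) =o[𝓝[>] 0] (· ^ k) := by
    have := h.comp_tendsto hray
    simp only [Function.comp_def, add_sub_cancel_left] at this
    exact this.trans_isBigO hnorm
  refine (zero_add (A * ‖y‖ ^ k) ▸ hsmall.tendsto_div_nhds_zero.add_const (A * ‖y‖ ^ k)).congr' ?_
  filter_upwards [self_mem_nhdsWithin] with ε (hε : 0 < ε)
  rw [norm_smul, norm_of_nonneg hε.le]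
  field_simp
  ring

variable [MeasurableSpace E]

/-- The family `F ε`, dominated by `G`, truncates `F₀` at scale `ε⁻¹`: it coincides with `F₀` on
the ball of radius `r / ε`. These are the integrands built from a cut-off bubble. -/
structure IsTruncation (μ : Measure E) (r : ℝ) (F : ℝ → E → ℝ) (F₀ G : E → ℝ) : Prop where
  pos : 0 < r
  aestronglyMeasurable : ∀ ε, AEStronglyMeasurable (F ε) μ
  eq_of_lt : ∀ ε > 0, ∀ y, ε * ‖y‖ < r → F ε y = F₀ y
  eventually_abs_le : ∀ᶠ ε in 𝓝[>] 0, ∀ y, |F ε y| ≤ G y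

namespace IsTruncation

variable {μ : Measure E} {r : ℝ} {F : ℝ → E → ℝ} {F₀ G : E → ℝ}

lemma eventually_eq (h : IsTruncation μ r F F₀ G) (y : E) : ∀ᶠ ε in 𝓝[>] 0, F ε y = F₀ y := by
  have hlim : Tendsto (fun ε : ℝ => ε * ‖y‖) (𝓝[>] 0) (𝓝 0) :=
    ((continuous_mul_const ‖y‖).tendsto' 0 0 (zero_mul _)).mono_left nhdsWithin_le_nhds
  filter_upwards [hlim.eventually_lt_const h.pos, self_mem_nhdsWithin] with ε hlt hε
  exact h.eq_of_lt ε hε y hlt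

lemma abs_le (h : IsTruncation μ r F F₀ G) (y : E) : |F₀ y| ≤ G y := by
  obtain ⟨ε, heq, hle⟩ := ((h.eventually_eq y).and h.eventually_abs_le).exists
  exact heq ▸ hle y

lemma nonneg (h : IsTruncation μ r F F₀ G) (y : E) : 0 ≤ G y :=
  (abs_nonneg _).trans (h.abs_le y)

lemma integrable (h : IsTruncation μ r F F₀ G) (hG : Integrable G μ) : Integrable F₀ μ :=
  hG.mono'
    (aestronglyMeasurable_of_tendsto_ae (𝓝[>] (0 : ℝ)) h.aestronglyMeasurable
      (.of_forall fun y => tendsto_const_nhds.congr' (.symm (h.eventually_eq y))))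
    (.of_forall h.abs_le)

lemma eventually_integrable (h : IsTruncation μ r F F₀ G) (hG : Integrable G μ) :
    ∀ᶠ ε in 𝓝[>] 0, Integrable (F ε) μ := by
  filter_upwards [h.eventually_abs_le] with ε hε
  exact hG.mono' (h.aestronglyMeasurable ε) (.of_forall hε)

lemma eventually_abs_sub_div_pow_le (h : IsTruncation μ r F F₀ G) (k : ℕ) :
    ∀ᶠ ε in 𝓝[>] 0, ∀ y, |(F ε y - F₀ y) / ε ^ k| ≤ 2 / r ^ k * (‖y‖ ^ k * G y) := by
  have hr := h.pos
  filter_upwards [h.eventually_abs_le, self_mem_nhdsWithin] with ε hle (hε : 0 < ε) y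
  have hGy := h.nonneg y
  rcases lt_or_ge (ε * ‖y‖) r with hlt | hge
  · rw [h.eq_of_lt ε hε y hlt, sub_self, zero_div, abs_zero]
    positivity
  · have hdiff : |F ε y - F₀ y| ≤ 2 * G y :=
      (abs_sub _ _).trans (by linarith [hle y, h.abs_le y])
    have hscale : r ^ k ≤ ε ^ k * ‖y‖ ^ k := by
      rw [← mul_pow]
      gcongr
    rw [abs_div, abs_of_pos (pow_pos hε k), div_le_iff₀ (by positivity), div_mul_eq_mul_div,
      div_mul_eq_mul_div, le_div_iff₀ (by positivity)]
    calc |F ε y - F₀ y| * r ^ k ≤ 2 * G y * (ε ^ k * ‖y‖ ^ k) := by gcongr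
      _ = 2 * (‖y‖ ^ k * G y) * ε ^ k := by ring

lemma integral_sub_isLittleO (h : IsTruncation μ r F F₀ G) {k : ℕ} (hG : Integrable G μ)
    (hkG : Integrable (fun y => ‖y‖ ^ k * G y) μ) :
    (fun ε => ∫ y, F ε y ∂μ - ∫ y, F₀ y ∂μ) =o[𝓝[>] 0] (· ^ k) := by
  have hF₀ := h.integrable hG
  have hlim : Tendsto (fun ε => ∫ y, (F ε y - F₀ y) / ε ^ k ∂μ) (𝓝[>] 0) (𝓝 (∫ _, 0 ∂μ)) := by
    refine tendsto_integral_filter_of_dominated_convergence _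
      (.of_forall fun ε => by
        simp only [div_eq_mul_inv]
        exact ((h.aestronglyMeasurable ε).sub hF₀.aestronglyMeasurable).mul_const _)
      ((h.eventually_abs_sub_div_pow_le k).mono fun ε hε => .of_forall hε)
      (hkG.const_mul (2 / r ^ k)) (.of_forall fun y => tendsto_const_nhds.congr' ?_)
    filter_upwards [h.eventually_eq y] with ε hε
    rw [hε, sub_self, zero_div]
  rw [integral_zero] at hlim
  refine (isLittleO_iff_tendsto' ?_).2 (hlim.congr' ?_)
  · filter_upwards [self_mem_nhdsWithin] with ε (hε : 0 < ε) hzero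
    exact absurd hzero (pow_pos hε k).ne'
  · filter_upwards [h.eventually_integrable hG] with ε hε
    rw [integral_div, integral_sub hε hF₀]

variable [NormedSpace ℝ E] {a : E → ℝ} {x₀ : E} {k : ℕ} {A C R : ℝ}

lemma eventually_abs_weight_mul_le (h : IsTruncation μ r F F₀ G)
    (hloc : ∀ x ∈ Metric.closedBall x₀ R, |a x - a x₀| ≤ C * ‖x - x₀‖ ^ k)
    (hsupp : ∀ ε > 0, ∀ y, R < ε * ‖y‖ → F ε y = 0) :
    ∀ᶠ ε in 𝓝[>] 0, ∀ y,
      |(a (x₀ + ε • y) - a x₀) / ε ^ k * F ε y| ≤ |C| * (‖y‖ ^ k * G y) := by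
  filter_upwards [h.eventually_abs_le, self_mem_nhdsWithin] with ε hle (hε : 0 < ε) y
  have hGy := h.nonneg y
  rcases lt_or_ge R (ε * ‖y‖) with hlt | hge
  · rw [hsupp ε hε y hlt, mul_zero, abs_zero]
    positivity
  · have hnorm : ‖x₀ + ε • y - x₀‖ = ε * ‖y‖ := by
      rw [add_sub_cancel_left, norm_smul, norm_of_nonneg hε.le]
    have hweight := hloc (x₀ + ε • y) (mem_closedBall_iff_norm.2 (hnorm.trans_le hge))
    rw [hnorm] at hweight
    rw [abs_mul, abs_div, abs_of_pos (pow_pos hε k), ← mul_assoc]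
    gcongr
    · rw [div_le_iff₀ (by positivity)]
      calc |a (x₀ + ε • y) - a x₀| ≤ C * (ε * ‖y‖) ^ k := hweight
        _ ≤ |C| * (ε * ‖y‖) ^ k := by
            gcongr
            exact le_abs_self C
        _ = |C| * ‖y‖ ^ k * ε ^ k := by ring
    · exact hle y

variable [FiniteDimensional ℝ E] [BorelSpace E] [μ.IsAddHaarMeasure]

lemma aestronglyMeasurable_weight_mul (h : IsTruncation μ r F F₀ G)
    (ha : AEStronglyMeasurable a μ) {ε : ℝ} (hε : ε ≠ 0) :
    AEStronglyMeasurable (fun y => (a (x₀ + ε • y) - a x₀) / ε ^ k * F ε y) μ := by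
  have hcomp : AEStronglyMeasurable (fun y => a (x₀ + ε • y)) μ :=
    ha.comp_quasiMeasurePreserving <|
      (quasiMeasurePreserving_add_left μ x₀).comp (Measure.quasiMeasurePreserving_smul μ hε)
  simp only [div_eq_mul_inv]
  exact ((hcomp.sub aestronglyMeasurable_const).mul_const _).mul (h.aestronglyMeasurable ε)

lemma integral_weight_mul_expansion (h : IsTruncation μ r F F₀ G)
    (ha : AEStronglyMeasurable a μ) (hexp : HasRadialExpansionAt a x₀ k A)
    (hloc : ∀ x ∈ Metric.closedBall x₀ R, |a x - a x₀| ≤ C * ‖x - x₀‖ ^ k)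
    (hsupp : ∀ ε > 0, ∀ y, R < ε * ‖y‖ → F ε y = 0) (hG : Integrable G μ)
    (hkG : Integrable (fun y => ‖y‖ ^ k * G y) μ) :
    (fun ε => ∫ y, a (x₀ + ε • y) * F ε y ∂μ - a x₀ * ∫ y, F₀ y ∂μ
      - A * (∫ y, ‖y‖ ^ k * F₀ y ∂μ) * ε ^ k) =o[𝓝[>] 0] (· ^ k) := by
  have hmeas : ∀ᶠ ε in 𝓝[>] (0 : ℝ),
      AEStronglyMeasurable (fun y => (a (x₀ + ε • y) - a x₀) / ε ^ k * F ε y) μ := by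
    filter_upwards [self_mem_nhdsWithin] with ε (hε : 0 < ε)
    exact h.aestronglyMeasurable_weight_mul ha hε.ne'
  have hbound := h.eventually_abs_weight_mul_le hloc hsupp
  have hlim : Tendsto (fun ε => ∫ y, (a (x₀ + ε • y) - a x₀) / ε ^ k * F ε y ∂μ) (𝓝[>] 0)
      (𝓝 (∫ y, A * ‖y‖ ^ k * F₀ y ∂μ)) :=
    tendsto_integral_filter_of_dominated_convergence _ hmeas
      (hbound.mono fun ε hε => .of_forall hε) (hkG.const_mul |C|) <| .of_forall fun y =>
        (hexp.tendsto_rescale y).mul <|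
          tendsto_const_nhds.congr' <| (h.eventually_eq y).mono fun _ => Eq.symm
  simp only [mul_assoc, integral_const_mul] at hlim
  have hrate := isLittleO_one_iff ℝ |>.2 (tendsto_sub_nhds_zero_iff.2 hlim)
  have herror : (fun ε => (∫ y, (a (x₀ + ε • y) - a x₀) / ε ^ k * F ε y ∂μ
      - A * ∫ y, ‖y‖ ^ k * F₀ y ∂μ) * ε ^ k) =o[𝓝[>] 0] (· ^ k) := by
    simpa using hrate.mul_isBigO (isBigO_refl (fun ε : ℝ => ε ^ k) (𝓝[>] 0))
  refine (((h.integral_sub_isLittleO hG hkG).const_mul_left (a x₀)).add herror).congr' ?_ .rfl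
  filter_upwards [h.eventually_integrable hG, hmeas, hbound, self_mem_nhdsWithin]
    with ε hint hm hb (hε : 0 < ε)
  have hsplit : ∫ y, a (x₀ + ε • y) * F ε y ∂μ = a x₀ * ∫ y, F ε y ∂μ
      + ε ^ k * ∫ y, (a (x₀ + ε • y) - a x₀) / ε ^ k * F ε y ∂μ := by
    rw [← integral_const_mul, ← integral_const_mul, ← integral_add (hint.const_mul _)
      (((hkG.const_mul |C|).mono' hm (.of_forall hb)).const_mul _)]
    congr with y
    field_simp
    ring
  rw [hsplit]
  ring

end IsTruncation

end Truncation

section Bubble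

variable {E : Type*} [NormedAddCommGroup E] [InnerProductSpace ℝ E]

lemma contDiff_one_add_norm_sq_rpow (s : ℝ) {m : ℕ∞} :
    ContDiff ℝ m fun y : E => (1 + ‖y‖ ^ 2) ^ s :=
  (contDiff_const.add (contDiff_norm_sq ℝ)).rpow_const_of_ne fun y => by positivity

lemma norm_fderiv_one_add_norm_sq_rpow_sq (s : ℝ) (y : E) :
    ‖fderiv ℝ (fun y : E => (1 + ‖y‖ ^ 2) ^ s) y‖ ^ 2 =
      (2 * s) ^ 2 * (‖y‖ ^ 2 * (1 + ‖y‖ ^ 2) ^ (2 * s - 2)) := by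
  have hpos : 0 < 1 + ‖y‖ ^ 2 := by positivity
  have hderiv := ((hasStrictFDerivAt_norm_sq y).hasFDerivAt.const_add 1).rpow_const
    (p := s) (.inl hpos.ne')
  have hpow : ((1 + ‖y‖ ^ 2) ^ (s - 1)) ^ 2 = (1 + ‖y‖ ^ 2) ^ (2 * s - 2) := by
    rw [← rpow_mul_natCast hpos.le]
    congr 1
    push_cast
    ring
  rw [hderiv.fderiv, ← Nat.cast_smul_eq_nsmul ℝ, norm_smul, norm_smul, innerSL_apply_norm,
    norm_mul, mul_pow, mul_pow, mul_pow, norm_of_nonneg (rpow_nonneg hpos.le _), hpow,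
    norm_eq_abs s, sq_abs]
  norm_num
  ring

/-- The Aubin–Talenti bubble `(1 + ‖y‖ ^ 2) ^ (-(n - 2) / 2)`, `n = dim E`, without its
normalising constant. -/
def bubble (y : E) : ℝ := (1 + ‖y‖ ^ 2) ^ (-((finrank ℝ E - 2 : ℝ) / 2))

lemma bubble_pos (y : E) : 0 < bubble y :=
  rpow_pos_of_pos (by positivity) _

lemma contDiff_bubble {m : ℕ∞} : ContDiff ℝ m (bubble : E → ℝ) :=
  contDiff_one_add_norm_sq_rpow _

lemma bubble_rpow (p : ℝ) (y : E) :
    bubble y ^ p = (1 + ‖y‖ ^ 2) ^ (-((finrank ℝ E - 2) * p / 2)) := by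
  rw [bubble, ← rpow_mul (by positivity)]
  congr 1
  ring

lemma norm_fderiv_bubble_sq (y : E) :
    ‖fderiv ℝ bubble y‖ ^ 2 =
      (finrank ℝ E - 2) ^ 2 * (‖y‖ ^ 2 * (1 + ‖y‖ ^ 2) ^ (-(finrank ℝ E : ℝ))) := by
  unfold bubble
  rw [norm_fderiv_one_add_norm_sq_rpow_sq]
  ring_nf

lemma norm_fderiv_bubble_sq_le (y : E) :
    ‖fderiv ℝ bubble y‖ ^ 2 ≤
      (finrank ℝ E - 2) ^ 2 * (1 + ‖y‖ ^ 2) ^ (-(finrank ℝ E - 1 : ℝ)) := by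
  rw [norm_fderiv_bubble_sq]
  gcongr
  calc ‖y‖ ^ 2 * (1 + ‖y‖ ^ 2) ^ (-(finrank ℝ E : ℝ))
      ≤ (1 + ‖y‖ ^ 2) * (1 + ‖y‖ ^ 2) ^ (-(finrank ℝ E : ℝ)) := by
        gcongr
        linarith
    _ = (1 + ‖y‖ ^ 2) ^ (-(finrank ℝ E - 1 : ℝ)) := by
        rw [mul_comm, ← rpow_add_one (by positivity)]
        ring_nf

lemma bubble_sq_div (y : E) :
    bubble y ^ 2 / (1 + ‖y‖ ^ 2) = (1 + ‖y‖ ^ 2) ^ (-(finrank ℝ E - 1 : ℝ)) := by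
  rw [← rpow_two, bubble_rpow, ← rpow_sub_one (by positivity)]
  ring_nf

variable [FiniteDimensional ℝ E]

/-- The bubble cut off at scale `ε⁻¹`. In the variable `x = x₀ + ε • y` it is, up to a constant
factor, the usual test function `f (x - x₀) (ε ^ 2 + ‖x - x₀‖ ^ 2) ^ (-(n - 2) / 2)`. -/
def truncatedBubble (f : ContDiffBump (0 : E)) (ε : ℝ) (y : E) : ℝ := f (ε • y) * bubble y

variable (f : ContDiffBump (0 : E))

lemma contDiff_truncatedBubble {m : ℕ∞} (ε : ℝ) : ContDiff ℝ m (truncatedBubble f ε) :=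
  (f.contDiff.comp (contDiff_const_smul ε)).mul contDiff_bubble

lemma truncatedBubble_eqOn {ε : ℝ} (hε : 0 ≤ ε) :
    EqOn (truncatedBubble f ε) bubble {y | ε * ‖y‖ < f.rIn} := fun y (hy : ε * ‖y‖ < f.rIn) => by
  have hmem : ε • y ∈ Metric.closedBall 0 f.rIn := by
    rw [mem_closedBall_zero_iff, norm_smul, norm_of_nonneg hε]
    exact hy.le
  rw [truncatedBubble, f.one_of_mem_closedBall hmem, one_mul]

lemma truncatedBubble_nonneg (ε : ℝ) (y : E) : 0 ≤ truncatedBubble f ε y :=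
  mul_nonneg f.nonneg (bubble_pos y).le

lemma truncatedBubble_le_bubble (ε : ℝ) (y : E) : truncatedBubble f ε y ≤ bubble y :=
  mul_le_of_le_one_left (bubble_pos y).le f.le_one

lemma tsupport_truncatedBubble_subset {ε : ℝ} (hε : 0 ≤ ε) :
    tsupport (truncatedBubble f ε) ⊆ {y | ε * ‖y‖ ≤ f.rOut} := by
  refine closure_minimal (fun y hy => ?_) (isClosed_le (by fun_prop) continuous_const)
  have hsupp : ε • y ∈ Function.support f := fun hzero => hy (by simp [truncatedBubble, hzero])
  rw [f.support_eq, mem_ball_zero_iff, norm_smul, norm_of_nonneg hε] at hsupp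
  exact hsupp.le

lemma fderiv_truncatedBubble (ε : ℝ) (y : E) :
    fderiv ℝ (truncatedBubble f ε) y =
      f (ε • y) • fderiv ℝ bubble y + bubble y • ε • fderiv ℝ f (ε • y) := by
  have hf : DifferentiableAt ℝ (fun y => f (ε • y)) y :=
    (f.contDiff (n := 1)).differentiable one_ne_zero _ |>.comp y (by fun_prop)
  have hU : DifferentiableAt ℝ bubble y :=
    (contDiff_bubble (m := 1)).differentiable one_ne_zero y
  rw [← fderiv_comp_smul]
  exact fderiv_fun_mul hf hU

lemma exists_forall_norm_fderiv_sq_mul_le :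
    ∃ C, ∀ z, ‖fderiv ℝ f z‖ ^ 2 * (1 + ‖z‖ ^ 2) ≤ C := by
  have hcont : Continuous fun z => ‖fderiv ℝ f z‖ ^ 2 * (1 + ‖z‖ ^ 2) := by
    have := (f.contDiff (n := 1)).continuous_fderiv one_ne_zero
    fun_prop
  have hsupp : HasCompactSupport fun z => ‖fderiv ℝ f z‖ ^ 2 * (1 + ‖z‖ ^ 2) :=
    ((f.hasCompactSupport.fderiv ℝ).comp_left (g := fun L => ‖L‖ ^ 2) (by simp)).mul_right
  obtain ⟨C, hC⟩ := hsupp.exists_bound_of_continuous hcont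
  exact ⟨C, fun z => (le_abs_self _).trans (hC z)⟩

/- A gradient of the cutoff costs a factor `ε`, and on its support `ε * √(1 + ‖y‖ ^ 2)` is bounded,
so the truncated gradient decays like the gradient of the bubble, uniformly in `ε`. -/
lemma exists_norm_fderiv_truncatedBubble_sq_le :
    ∃ C, ∀ ε ∈ Ioc (0 : ℝ) 1, ∀ y, ‖fderiv ℝ (truncatedBubble f ε) y‖ ^ 2 ≤
      C * (1 + ‖y‖ ^ 2) ^ (-(finrank ℝ E - 1 : ℝ)) := by
  obtain ⟨C, hC⟩ := exists_forall_norm_fderiv_sq_mul_le f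
  refine ⟨2 * ((finrank ℝ E - 2) ^ 2 + C), fun ε hε y => ?_⟩
  have hscale : ε ^ 2 * (1 + ‖y‖ ^ 2) ≤ 1 + ‖ε • y‖ ^ 2 := by
    rw [norm_smul, mul_pow, norm_eq_abs, sq_abs]
    nlinarith [hε.1, hε.2]
  have hcutoff : (bubble y * (ε * ‖fderiv ℝ f (ε • y)‖)) ^ 2 ≤
      C * (1 + ‖y‖ ^ 2) ^ (-(finrank ℝ E - 1 : ℝ)) := by
    calc (bubble y * (ε * ‖fderiv ℝ f (ε • y)‖)) ^ 2
        = ‖fderiv ℝ f (ε • y)‖ ^ 2 * (ε ^ 2 * (1 + ‖y‖ ^ 2)) * (bubble y ^ 2 / (1 + ‖y‖ ^ 2)) := by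
          field_simp
      _ ≤ ‖fderiv ℝ f (ε • y)‖ ^ 2 * (1 + ‖ε • y‖ ^ 2) * (bubble y ^ 2 / (1 + ‖y‖ ^ 2)) := by
          gcongr
      _ ≤ C * (bubble y ^ 2 / (1 + ‖y‖ ^ 2)) := by
          gcongr
          exact hC _
      _ = C * (1 + ‖y‖ ^ 2) ^ (-(finrank ℝ E - 1 : ℝ)) := by rw [bubble_sq_div]
  have hnorm : ‖fderiv ℝ (truncatedBubble f ε) y‖ ≤
      ‖fderiv ℝ bubble y‖ + bubble y * (ε * ‖fderiv ℝ f (ε • y)‖) := by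
    rw [fderiv_truncatedBubble]
    refine (norm_add_le _ _).trans ?_
    rw [norm_smul, norm_smul, norm_smul, norm_of_nonneg f.nonneg, norm_of_nonneg (bubble_pos y).le,
      norm_of_nonneg hε.1.le]
    gcongr
    exact mul_le_of_le_one_left (norm_nonneg _) f.le_one
  calc ‖fderiv ℝ (truncatedBubble f ε) y‖ ^ 2
      ≤ (‖fderiv ℝ bubble y‖ + bubble y * (ε * ‖fderiv ℝ f (ε • y)‖)) ^ 2 := by gcongr
    _ ≤ 2 * (‖fderiv ℝ bubble y‖ ^ 2 + (bubble y * (ε * ‖fderiv ℝ f (ε • y)‖)) ^ 2) := add_sq_le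
    _ ≤ 2 * ((finrank ℝ E - 2) ^ 2 + C) * (1 + ‖y‖ ^ 2) ^ (-(finrank ℝ E - 1 : ℝ)) := by
        linarith [norm_fderiv_bubble_sq_le y]

variable [MeasurableSpace E] [BorelSpace E] (μ : Measure E)

lemma exists_isTruncation_norm_fderiv_sq : ∃ C,
    IsTruncation μ f.rIn (fun ε y => ‖fderiv ℝ (truncatedBubble f ε) y‖ ^ 2)
      (fun y => ‖fderiv ℝ bubble y‖ ^ 2)
      (fun y => C * (1 + ‖y‖ ^ 2) ^ (-(finrank ℝ E - 1 : ℝ))) := by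
  obtain ⟨C, hC⟩ := exists_norm_fderiv_truncatedBubble_sq_le f
  refine ⟨C, f.rIn_pos, fun ε => ?_, fun ε hε y hy => ?_, ?_⟩
  · have := (contDiff_truncatedBubble f (m := 1) ε).continuous_fderiv one_ne_zero
    exact (this.norm.pow 2).aestronglyMeasurable
  · have hopen : IsOpen {y : E | ε * ‖y‖ < f.rIn} := isOpen_lt (by fun_prop) continuous_const
    rw [((truncatedBubble_eqOn f hε.le).eventuallyEq_of_mem (hopen.mem_nhds hy)).fderiv_eq]
  · filter_upwards [Ioc_mem_nhdsGT one_pos] with ε hε y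
    rw [abs_of_nonneg (sq_nonneg _)]
    exact hC ε hε y

lemma isTruncation_abs_rpow {p : ℝ} (hp : 0 ≤ p) :
    IsTruncation μ f.rIn (fun ε y => |truncatedBubble f ε y| ^ p) (fun y => bubble y ^ p)
      (fun y => bubble y ^ p) where
  pos := f.rIn_pos
  aestronglyMeasurable ε := ((contDiff_truncatedBubble f (m := 0) ε).continuous.abs.rpow_const
    fun _ => .inr hp).aestronglyMeasurable
  eq_of_lt ε hε y hy := by rw [truncatedBubble_eqOn f hε.le hy, abs_of_pos (bubble_pos y)]
  eventually_abs_le := .of_forall fun ε y => by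
    rw [abs_of_nonneg (truncatedBubble_nonneg f ε y),
      abs_of_nonneg (rpow_nonneg (truncatedBubble_nonneg f ε y) p)]
    exact rpow_le_rpow (truncatedBubble_nonneg f ε y) (truncatedBubble_le_bubble f ε y) hp

end Bubble

section Expansion

variable {E : Type*} [NormedAddCommGroup E] [InnerProductSpace ℝ E] [MeasurableSpace E]

/-- The best constant `‖∇U‖₂² / ‖U‖_q²` of the Sobolev inequality with critical exponent
`q = 2n / (n - 2)`, `n = dim E`, given through its minimiser, the bubble `U`. -/
def sobolevConstant (μ : Measure E) : ℝ :=
  (finrank ℝ E - 2) ^ 2 * bubbleMoment μ 2 (finrank ℝ E) /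
    bubbleMoment μ 0 (finrank ℝ E) ^ ((finrank ℝ E - 2 : ℝ) / finrank ℝ E)

variable (μ : Measure E)

lemma integral_norm_pow_mul_norm_fderiv_bubble_sq (p : ℕ) :
    ∫ y, ‖y‖ ^ p * ‖fderiv ℝ (bubble : E → ℝ) y‖ ^ 2 ∂μ =
      (finrank ℝ E - 2) ^ 2 * bubbleMoment μ (p + 2) (finrank ℝ E) := by
  simp only [norm_fderiv_bubble_sq, bubbleMoment, ← integral_const_mul]
  congr with y
  ring

variable [FiniteDimensional ℝ E] [BorelSpace E] [μ.IsAddHaarMeasure]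
  (f : ContDiffBump (0 : E)) {a b : E → ℝ} {x₀ : E}

lemma integral_mul_norm_fderiv_truncatedBubble_sq_isLittleO {A C : ℝ}
    (hn : 4 < finrank ℝ E) (ha : AEStronglyMeasurable a μ) (hexp : HasRadialExpansionAt a x₀ 2 A)
    (hloc : ∀ x ∈ Metric.closedBall x₀ f.rOut, |a x - a x₀| ≤ C * ‖x - x₀‖ ^ 2) :
    (fun ε => ∫ y, a (x₀ + ε • y) * ‖fderiv ℝ (truncatedBubble f ε) y‖ ^ 2 ∂μ
      - (finrank ℝ E - 2) ^ 2 * (a x₀ * bubbleMoment μ 2 (finrank ℝ E)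
        + A * bubbleMoment μ 4 (finrank ℝ E) * ε ^ 2)) =o[𝓝[>] 0] (· ^ 2) := by
  have hn' : (4 : ℝ) < finrank ℝ E := mod_cast hn
  obtain ⟨D, htrunc⟩ := exists_isTruncation_norm_fderiv_sq f μ
  have hG := (integrable_one_add_norm_sq_rpow_neg μ (s := finrank ℝ E - 1)
    (by linarith)).const_mul D
  have hkG : Integrable (fun y : E => ‖y‖ ^ 2 *
      (D * (1 + ‖y‖ ^ 2) ^ (-(finrank ℝ E - 1 : ℝ)))) μ := by
    simpa only [mul_left_comm] using (integrable_norm_pow_mul_one_add_norm_sq_rpow_neg μ (p := 2)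
      (s := finrank ℝ E - 1) (by push_cast; linarith)).const_mul D
  have hsupp : ∀ ε > 0, ∀ y, f.rOut < ε * ‖y‖ →
      ‖fderiv ℝ (truncatedBubble f ε) y‖ ^ 2 = 0 := fun ε hε y hy => by
    have hy' : y ∉ tsupport (truncatedBubble f ε) := fun hmem =>
      hy.not_ge (tsupport_truncatedBubble_subset f hε.le hmem)
    simp [fderiv_of_notMem_tsupport ℝ hy']
  refine (htrunc.integral_weight_mul_expansion ha hexp hloc hsupp hG hkG).congr_left fun ε => ?_
  have h₂ := integral_norm_pow_mul_norm_fderiv_bubble_sq μ 0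
  simp only [pow_zero, one_mul, zero_add] at h₂
  rw [h₂, integral_norm_pow_mul_norm_fderiv_bubble_sq]
  ring

lemma tendsto_integral_truncatedBubble_sq (hn : 4 < finrank ℝ E) :
    Tendsto (fun ε => ∫ y, truncatedBubble f ε y ^ 2 ∂μ) (𝓝[>] 0)
      (𝓝 (bubbleMoment μ 0 (finrank ℝ E - 2))) := by
  have hn' : (4 : ℝ) < finrank ℝ E := mod_cast hn
  have htrunc := isTruncation_abs_rpow f μ (p := 2) zero_le_two
  have hG : Integrable (fun y : E => bubble y ^ (2 : ℝ)) μ := by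
    simpa only [bubble_rpow, mul_div_cancel_right₀ _ (two_ne_zero' ℝ)] using
      integrable_one_add_norm_sq_rpow_neg μ (s := finrank ℝ E - 2) (by linarith)
  have hlim := htrunc.integral_sub_isLittleO (k := 0) hG (by simpa using hG)
  simp only [pow_zero, isLittleO_one_iff, tendsto_sub_nhds_zero_iff, bubble_rpow] at hlim
  simpa [bubbleMoment] using hlim

lemma integral_abs_truncatedBubble_rpow_isLittleO {q : ℝ} (hn : 2 < finrank ℝ E)
    (hq : q = 2 * finrank ℝ E / (finrank ℝ E - 2)) :
    (fun ε => ∫ y, |truncatedBubble f ε y| ^ q ∂μ - bubbleMoment μ 0 (finrank ℝ E))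
      =o[𝓝[>] 0] (· ^ 2) := by
  have hn' : (2 : ℝ) < finrank ℝ E := mod_cast hn
  have hexponent : (finrank ℝ E - 2) * q / 2 = (finrank ℝ E : ℝ) := by
    rw [hq]
    field [(by linarith : (finrank ℝ E - 2 : ℝ) ≠ 0)]
  have hq₀ : 0 ≤ q := by
    rw [hq]
    exact div_nonneg (by positivity) (by linarith)
  have hbubble : (fun y : E => bubble y ^ q) = fun y => (1 + ‖y‖ ^ 2) ^ (-(finrank ℝ E : ℝ)) := by
    simp only [bubble_rpow, hexponent]
  have htrunc := isTruncation_abs_rpow f μ hq₀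
  rw [hbubble] at htrunc
  simpa [bubbleMoment] using htrunc.integral_sub_isLittleO
    (integrable_one_add_norm_sq_rpow_neg μ (by linarith))
    (integrable_norm_pow_mul_one_add_norm_sq_rpow_neg μ (by push_cast; linarith))

lemma tendsto_integral_abs_truncatedBubble_rpow {q : ℝ} (hn : 2 < finrank ℝ E)
    (hq : q = 2 * finrank ℝ E / (finrank ℝ E - 2)) :
    Tendsto (fun ε => ∫ y, |truncatedBubble f ε y| ^ q ∂μ) (𝓝[>] 0)
      (𝓝 (bubbleMoment μ 0 (finrank ℝ E))) := by
  have hsq : Tendsto (fun ε : ℝ => ε ^ 2) (𝓝[>] 0) (𝓝 0) :=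
    ((continuous_pow 2).tendsto' 0 0 (by simp)).mono_left nhdsWithin_le_nhds
  exact tendsto_sub_nhds_zero_iff.1
    ((integral_abs_truncatedBubble_rpow_isLittleO μ f hn hq).trans_tendsto hsq)

lemma sobolevConstant_mul_rpow_isLittleO {q : ℝ} (hn : 2 < finrank ℝ E)
    (hq : q = 2 * finrank ℝ E / (finrank ℝ E - 2)) :
    (fun ε => sobolevConstant μ * (∫ y, |truncatedBubble f ε y| ^ q ∂μ) ^ (2 / q)
      - (finrank ℝ E - 2) ^ 2 * bubbleMoment μ 2 (finrank ℝ E)) =o[𝓝[>] 0] (· ^ 2) := by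
  have hn' : (2 : ℝ) < finrank ℝ E := mod_cast hn
  have hpos : 0 < bubbleMoment μ 0 (finrank ℝ E) := bubbleMoment_zero_pos μ (by linarith)
  have hexponent : 2 / q = (finrank ℝ E - 2 : ℝ) / finrank ℝ E := by
    rw [hq]
    field
  have hrpow := ((hasDerivAt_rpow_const (p := 2 / q) (.inl hpos.ne')).isBigO_sub.comp_tendsto
    (tendsto_integral_abs_truncatedBubble_rpow μ f hn hq)).trans_isLittleO
      (integral_abs_truncatedBubble_rpow_isLittleO μ f hn hq)
  refine (hrpow.const_mul_left (sobolevConstant μ)).congr_left fun ε => ?_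
  have hbubble : sobolevConstant μ * bubbleMoment μ 0 (finrank ℝ E) ^ (2 / q) =
      (finrank ℝ E - 2) ^ 2 * bubbleMoment μ 2 (finrank ℝ E) := by
    rw [hexponent, sobolevConstant, div_mul_cancel₀ _ (rpow_pos_of_pos hpos _).ne']
  rw [Function.comp_def, mul_sub, hbubble]

lemma eventually_neg_of_sub_mul_sq_isLittleO {g : ℝ → ℝ} {c : ℝ} (hc : c < 0)
    (h : (fun ε => g ε - c * ε ^ 2) =o[𝓝[>] 0] (· ^ 2)) : ∀ᶠ ε in 𝓝[>] 0, g ε < 0 := by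
  filter_upwards [h.def (c := -c / 2) (by linarith), self_mem_nhdsWithin] with ε hε (hpos : 0 < ε)
  rw [norm_of_nonneg (sq_nonneg ε), norm_eq_abs] at hε
  nlinarith [le_abs_self (g ε - c * ε ^ 2), pow_pos hpos 2]

lemma mul_bubbleMoment_four_lt {A lam : ℝ} (hn : 4 < finrank ℝ E)
    (hlam : finrank ℝ E * (finrank ℝ E - 2) * (finrank ℝ E + 2) / (8 * (finrank ℝ E - 1)) * A
      < lam) :
    A / 2 * ((finrank ℝ E - 2) ^ 2 * bubbleMoment μ 4 (finrank ℝ E)) <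
      lam * bubbleMoment μ 0 (finrank ℝ E - 2) := by
  have hn' : (4 : ℝ) < finrank ℝ E := mod_cast hn
  have hpos : 0 < bubbleMoment μ 0 (finrank ℝ E - 2) := bubbleMoment_zero_pos μ (by linarith)
  have hfour := four_mul_bubbleMoment_four_finrank μ hn
  calc A / 2 * ((finrank ℝ E - 2) ^ 2 * bubbleMoment μ 4 (finrank ℝ E))
      = finrank ℝ E * (finrank ℝ E - 2) * (finrank ℝ E + 2) / (8 * (finrank ℝ E - 1)) * A
          * bubbleMoment μ 0 (finrank ℝ E - 2) := by
        have : (finrank ℝ E - 1 : ℝ) ≠ 0 := by linarith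
        field_simp
        linear_combination 2 * A * (finrank ℝ E - 2 : ℝ) * hfour
    _ < lam * bubbleMoment μ 0 (finrank ℝ E - 2) := by gcongr

lemma eventually_rescaledEnergy_lt {A B C D lam q : ℝ} (hn : 4 < finrank ℝ E)
    (ha : AEStronglyMeasurable a μ) (hb : AEStronglyMeasurable b μ)
    (hexpa : HasRadialExpansionAt a x₀ 2 A) (hexpb : HasRadialExpansionAt b x₀ 2 B)
    (hloca : ∀ x ∈ Metric.closedBall x₀ f.rOut, |a x - a x₀| ≤ C * ‖x - x₀‖ ^ 2)
    (hlocb : ∀ x ∈ Metric.closedBall x₀ f.rOut, |b x - b x₀| ≤ D * ‖x - x₀‖ ^ 2)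
    (hq : q = 2 * finrank ℝ E / (finrank ℝ E - 2))
    (hlam : finrank ℝ E * (finrank ℝ E - 2) * (finrank ℝ E + 2) / (8 * (finrank ℝ E - 1))
      * (A + B) < lam) :
    ∀ᶠ ε in 𝓝[>] 0,
      1 / 2 * ∫ y, a (x₀ + ε • y) * ‖fderiv ℝ (truncatedBubble f ε) y‖ ^ 2 ∂μ
        + 1 / 2 * ∫ y, b (x₀ + ε • y) * ‖fderiv ℝ (truncatedBubble f ε) y‖ ^ 2 ∂μ
        - lam * (ε ^ 2 * ∫ y, truncatedBubble f ε y ^ 2 ∂μ) <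
      (a x₀ + b x₀) / 2 * sobolevConstant μ *
        (∫ y, |truncatedBubble f ε y| ^ q ∂μ) ^ (2 / q) := by
  have hEa := integral_mul_norm_fderiv_truncatedBubble_sq_isLittleO μ f hn ha hexpa hloca
  have hEb := integral_mul_norm_fderiv_truncatedBubble_sq_isLittleO μ f hn hb hexpb hlocb
  have hS := sobolevConstant_mul_rpow_isLittleO μ f (by omega) hq
  have hL : (fun ε => (∫ y, truncatedBubble f ε y ^ 2 ∂μ - bubbleMoment μ 0 (finrank ℝ E - 2))
      * ε ^ 2) =o[𝓝[>] 0] fun ε : ℝ => ε ^ 2 := by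
    have hlim := tendsto_sub_nhds_zero_iff.2 (tendsto_integral_truncatedBubble_sq μ f hn)
    simpa using ((isLittleO_one_iff ℝ).2 hlim).mul_isBigO
      (isBigO_refl (fun ε : ℝ => ε ^ 2) (𝓝[>] 0))
  have hsum := (((hEa.add hEb).const_mul_left (1 / 2)).sub (hL.const_mul_left lam)).sub
    (hS.const_mul_left ((a x₀ + b x₀) / 2))
  refine (eventually_neg_of_sub_mul_sq_isLittleO
    (sub_neg.2 (mul_bubbleMoment_four_lt μ hn hlam)) ?_).mono fun ε => sub_neg.1
  refine hsum.congr_left fun ε => ?_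
  ring

end Expansion

section Rescaling

variable {E : Type*} [NormedAddCommGroup E] [NormedSpace ℝ E]

/-- The profile `W` concentrated at the point `x₀` at scale `ε`. -/
def concentrate (x₀ : E) (ε : ℝ) (W : E → ℝ) (x : E) : ℝ := W (ε⁻¹ • (x - x₀))

variable {x₀ : E} {ε : ℝ} {W : E → ℝ}

lemma contDiff_concentrate {m : ℕ∞} (hW : ContDiff ℝ m W) : ContDiff ℝ m (concentrate x₀ ε W) :=
  hW.comp (contDiff_const.smul (contDiff_id.sub contDiff_const))

lemma fderiv_concentrate (x : E) :
    fderiv ℝ (concentrate x₀ ε W) x = ε⁻¹ • fderiv ℝ W (ε⁻¹ • (x - x₀)) := by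
  unfold concentrate
  rw [fderiv_comp_sub (f := fun x => W (ε⁻¹ • x)), fderiv_comp_smul]

lemma tsupport_concentrate_subset {R : ℝ} (hε : 0 < ε) (hW : tsupport W ⊆ {y | ε * ‖y‖ ≤ R}) :
    tsupport (concentrate x₀ ε W) ⊆ Metric.closedBall x₀ R := by
  refine closure_minimal (fun x hx => ?_) Metric.isClosed_closedBall
  have hmem : ε * ‖ε⁻¹ • (x - x₀)‖ ≤ R := hW (subset_tsupport W hx)
  rwa [norm_smul, norm_inv, norm_of_nonneg hε.le, mul_inv_cancel_left₀ hε.ne',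
    ← mem_closedBall_iff_norm] at hmem

variable [MeasurableSpace E]

/-- The functional `F_λ`, i.e. `(1/2) ∫ a |∇u|² + (1/2) ∫ b |∇v|² - λ ∫ u v` over `Ω`; the norm of
the gradient is that of the Fréchet derivative. -/
def coupledEnergy (μ : Measure E) (Ω : Set E) (a b : E → ℝ) (lam : ℝ) (u v : E → ℝ) : ℝ :=
  1 / 2 * (∫ x in Ω, a x * ‖fderiv ℝ u x‖ ^ 2 ∂μ) + 1 / 2 * (∫ x in Ω, b x * ‖fderiv ℝ v x‖ ^ 2 ∂μ)
    - lam * ∫ x in Ω, u x * v x ∂μ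

variable {μ : Measure E} {Ω : Set E} {a b : E → ℝ} {lam : ℝ}

lemma coupledEnergy_const_smul (c : ℝ) (u v : E → ℝ) :
    coupledEnergy μ Ω a b lam (c • u) (c • v) = c ^ 2 * coupledEnergy μ Ω a b lam u v := by
  have hgrad : ∀ (a w : E → ℝ), ∫ x in Ω, a x * ‖fderiv ℝ (c • w) x‖ ^ 2 ∂μ =
      c ^ 2 * ∫ x in Ω, a x * ‖fderiv ℝ w x‖ ^ 2 ∂μ := fun a w => by
    simp only [fderiv_const_smul_field, Pi.smul_apply, norm_smul, mul_pow, norm_eq_abs, sq_abs,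
      mul_left_comm _ (c ^ 2), integral_const_mul]
  have hmul : ∫ x in Ω, (c • u) x * (c • v) x ∂μ = c ^ 2 * ∫ x in Ω, u x * v x ∂μ := by
    rw [← integral_const_mul]
    congr with x
    simp only [Pi.smul_apply, smul_eq_mul]
    ring
  rw [coupledEnergy, hgrad, hgrad, hmul, coupledEnergy]
  ring

lemma exists_normalized_of_coupledEnergy_lt {w : E → ℝ} {q σ : ℝ} (hq : q ≠ 0)
    (hw : ContDiff ℝ (⊤ : ℕ∞) w) (hcompact : HasCompactSupport w) (hΩ : tsupport w ⊆ Ω)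
    (hpos : 0 < ∫ x in Ω, |w x| ^ q ∂μ)
    (hlt : coupledEnergy μ Ω a b lam w w < σ * (∫ x in Ω, |w x| ^ q ∂μ) ^ (2 / q)) :
    ∃ u, ContDiff ℝ (⊤ : ℕ∞) u ∧ HasCompactSupport u ∧ tsupport u ⊆ Ω ∧
      (∫ x in Ω, |u x| ^ q ∂μ) ^ (1 / q) = 1 ∧ coupledEnergy μ Ω a b lam u u < σ := by
  set Q := ∫ x in Ω, |w x| ^ q ∂μ with hQ
  have hmass : ∫ x in Ω, |(Q ^ (-(1 / q)) • w) x| ^ q ∂μ = 1 := by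
    have hfactor : ∀ x, |(Q ^ (-(1 / q)) • w) x| ^ q = Q⁻¹ * |w x| ^ q := fun x => by
      rw [Pi.smul_apply, smul_eq_mul, abs_mul, abs_of_pos (rpow_pos_of_pos hpos _),
        mul_rpow (rpow_nonneg hpos.le _) (abs_nonneg _), ← rpow_mul hpos.le, neg_mul,
        one_div_mul_cancel hq, rpow_neg_one]
    simp only [hfactor, integral_const_mul, ← hQ, inv_mul_cancel₀ hpos.ne']
  refine ⟨Q ^ (-(1 / q)) • w, contDiff_const.smul hw, hcompact.smul_left,
    (closure_mono (Function.support_const_smul_subset _ w)).trans hΩ, by rw [hmass, one_rpow], ?_⟩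
  have hsq : (Q ^ (-(1 / q))) ^ 2 = (Q ^ (2 / q))⁻¹ := by
    rw [← rpow_mul_natCast hpos.le, ← rpow_neg hpos.le]
    congr 1
    push_cast
    ring
  rw [coupledEnergy_const_smul, hsq, inv_mul_lt_iff₀ (rpow_pos_of_pos hpos _), mul_comm]
  exact hlt

variable [FiniteDimensional ℝ E] [BorelSpace E] [μ.IsAddHaarMeasure]

lemma integral_concentrate (hε : 0 ≤ ε) :
    ∫ x, concentrate x₀ ε W x ∂μ = ε ^ finrank ℝ E * ∫ y, W y ∂μ := by
  unfold concentrate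
  rw [integral_sub_right_eq_self (fun x => W (ε⁻¹ • x)), Measure.integral_comp_inv_smul,
    abs_of_nonneg (by positivity), smul_eq_mul]

lemma setIntegral_abs_concentrate_rpow {q : ℝ} (hε : 0 ≤ ε) (hq : q ≠ 0)
    (hΩ : tsupport (concentrate x₀ ε W) ⊆ Ω) :
    ∫ x in Ω, |concentrate x₀ ε W x| ^ q ∂μ = ε ^ finrank ℝ E * ∫ y, |W y| ^ q ∂μ := by
  rw [setIntegral_eq_integral_of_forall_compl_eq_zero fun x hx => by
    rw [image_eq_zero_of_notMem_tsupport (mt (@hΩ x) hx), abs_zero, zero_rpow hq]]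
  exact integral_concentrate (W := fun y => |W y| ^ q) hε

lemma setIntegral_mul_norm_fderiv_concentrate_sq (hε : 0 < ε)
    (hΩ : tsupport (concentrate x₀ ε W) ⊆ Ω) (a : E → ℝ) :
    ∫ x in Ω, a x * ‖fderiv ℝ (concentrate x₀ ε W) x‖ ^ 2 ∂μ =
      ε ^ finrank ℝ E / ε ^ 2 * ∫ y, a (x₀ + ε • y) * ‖fderiv ℝ W y‖ ^ 2 ∂μ := by
  rw [setIntegral_eq_integral_of_forall_compl_eq_zero fun x hx => by
    rw [fderiv_of_notMem_tsupport ℝ (mt (@hΩ x) hx), norm_zero, zero_pow two_ne_zero, mul_zero],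
    div_mul_eq_mul_div, ← mul_div_assoc', ← integral_div,
    ← integral_concentrate (x₀ := x₀) hε.le]
  congr with x
  rw [fderiv_concentrate, norm_smul, norm_inv, norm_of_nonneg hε.le, concentrate,
    smul_inv_smul₀ hε.ne', add_sub_cancel, mul_pow, inv_pow]
  ring

lemma coupledEnergy_concentrate (hε : 0 < ε) (hΩ : tsupport (concentrate x₀ ε W) ⊆ Ω) :
    coupledEnergy μ Ω a b lam (concentrate x₀ ε W) (concentrate x₀ ε W) =
      ε ^ finrank ℝ E / ε ^ 2 * (1 / 2 * ∫ y, a (x₀ + ε • y) * ‖fderiv ℝ W y‖ ^ 2 ∂μ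
        + 1 / 2 * ∫ y, b (x₀ + ε • y) * ‖fderiv ℝ W y‖ ^ 2 ∂μ
        - lam * (ε ^ 2 * ∫ y, W y ^ 2 ∂μ)) := by
  have hmass : ∫ x in Ω, concentrate x₀ ε W x * concentrate x₀ ε W x ∂μ =
      ε ^ finrank ℝ E * ∫ y, W y ^ 2 ∂μ := by
    have hrpow := setIntegral_abs_concentrate_rpow (μ := μ) hε.le two_ne_zero hΩ
    simp only [rpow_two, sq_abs] at hrpow
    simpa only [sq] using hrpow
  rw [coupledEnergy, setIntegral_mul_norm_fderiv_concentrate_sq hε hΩ,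
    setIntegral_mul_norm_fderiv_concentrate_sq hε hΩ, hmass]
  field_simp

lemma coupledEnergy_concentrate_lt {q σ : ℝ} (hε : 0 < ε)
    (hn : 2 < finrank ℝ E) (hq : q = 2 * finrank ℝ E / (finrank ℝ E - 2))
    (hΩ : tsupport (concentrate x₀ ε W) ⊆ Ω)
    (hlt : 1 / 2 * ∫ y, a (x₀ + ε • y) * ‖fderiv ℝ W y‖ ^ 2 ∂μ
        + 1 / 2 * ∫ y, b (x₀ + ε • y) * ‖fderiv ℝ W y‖ ^ 2 ∂μ
        - lam * (ε ^ 2 * ∫ y, W y ^ 2 ∂μ) < σ * (∫ y, |W y| ^ q ∂μ) ^ (2 / q)) :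
    coupledEnergy μ Ω a b lam (concentrate x₀ ε W) (concentrate x₀ ε W) <
      σ * (∫ x in Ω, |concentrate x₀ ε W x| ^ q ∂μ) ^ (2 / q) := by
  have hn' : (2 : ℝ) < finrank ℝ E := mod_cast hn
  have hn₂ : (finrank ℝ E - 2 : ℝ) ≠ 0 := by linarith
  have hq₀ : q ≠ 0 := by
    rw [hq]
    positivity
  have hexponent : finrank ℝ E * (2 / q) = (finrank ℝ E : ℝ) - 2 := by
    rw [hq]
    field
  have hscale : (ε ^ finrank ℝ E) ^ (2 / q) = ε ^ finrank ℝ E / ε ^ 2 := by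
    rw [← rpow_natCast_mul hε.le, hexponent, rpow_sub hε, rpow_natCast, rpow_two]
  rw [coupledEnergy_concentrate hε hΩ, setIntegral_abs_concentrate_rpow hε.le hq₀ hΩ,
    mul_rpow (by positivity) (integral_nonneg fun y => by positivity), hscale, mul_left_comm σ]
  exact mul_lt_mul_of_pos_left hlt (by positivity)

end Rescaling

theorem stmt_4_general {E : Type*} [NormedAddCommGroup E] [InnerProductSpace ℝ E]
    [FiniteDimensional ℝ E] [MeasurableSpace E] [BorelSpace E] (μ : Measure E)
    [μ.IsAddHaarMeasure] (hn : 4 < finrank ℝ E) {Ω : Set E} {x₀ : E} (hΩ : Ω ∈ 𝓝 x₀)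
    {a b : E → ℝ} (ha : AEStronglyMeasurable a μ) (hb : AEStronglyMeasurable b μ) {A B : ℝ}
    (hexpa : HasRadialExpansionAt a x₀ 2 A) (hexpb : HasRadialExpansionAt b x₀ 2 B)
    {q lam : ℝ} (hq : q = 2 * finrank ℝ E / (finrank ℝ E - 2))
    (hlam : finrank ℝ E * (finrank ℝ E - 2) * (finrank ℝ E + 2) / (8 * (finrank ℝ E - 1))
      * (A + B) < lam) :
    ∃ u : E → ℝ, ContDiff ℝ (⊤ : ℕ∞) u ∧ HasCompactSupport u ∧ tsupport u ⊆ Ω ∧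
      (∫ x in Ω, |u x| ^ q ∂μ) ^ (1 / q) = 1 ∧
      coupledEnergy μ Ω a b lam u u < (a x₀ + b x₀) / 2 * sobolevConstant μ := by
  have hn' : (4 : ℝ) < finrank ℝ E := mod_cast hn
  have hq₀ : q ≠ 0 := by
    rw [hq]
    exact (div_pos (by positivity) (by linarith)).ne'
  obtain ⟨C, hC⟩ := hexpa.isBigO_sub.bound
  obtain ⟨D, hD⟩ := hexpb.isBigO_sub.bound
  obtain ⟨R, hR, hball⟩ := Metric.nhds_basis_closedBall.mem_iff.1 ((hC.and hD).and hΩ)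
  simp only [norm_eq_abs, abs_pow, abs_norm] at hball
  let f : ContDiffBump (0 : E) := ⟨R / 2, R, half_pos hR, half_lt_self hR⟩
  have henergy := eventually_rescaledEnergy_lt μ f hn ha hb hexpa hexpb
    (fun x hx => (hball hx).1.1) (fun x hx => (hball hx).1.2) hq hlam
  have hmass := (tendsto_integral_abs_truncatedBubble_rpow μ f (by omega) hq).eventually_const_lt
    (bubbleMoment_zero_pos μ (by linarith))
  obtain ⟨ε, ⟨hlt, hQ⟩, hε : 0 < ε⟩ := ((henergy.and hmass).and self_mem_nhdsWithin).exists
  have hsupp := tsupport_concentrate_subset (x₀ := x₀) hε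
    (tsupport_truncatedBubble_subset f hε.le)
  have hsuppΩ := hsupp.trans fun x hx => (hball hx).2
  refine exists_normalized_of_coupledEnergy_lt hq₀
    (contDiff_concentrate (contDiff_truncatedBubble f ε))
    (.of_support_subset_isCompact (isCompact_closedBall x₀ R) ((subset_tsupport _).trans hsupp))
    hsuppΩ ?_ (coupledEnergy_concentrate_lt hε (by omega) hq hsuppΩ hlt)
  rw [setIntegral_abs_concentrate_rpow hε.le hq₀ hsuppΩ]
  positivity

end

theorem stmt_4
    (N : ℕ) (hN : 5 ≤ N)
    (Ω : Set (EuclideanSpace ℝ (Fin N)))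
    (hΩo : IsOpen Ω) (hΩb : Bornology.IsBounded Ω) (hΩne : Ω.Nonempty)
    (x₀ : EuclideanSpace ℝ (Fin N)) (hx₀ : x₀ ∈ Ω)
    (a b : EuclideanSpace ℝ (Fin N) → ℝ)
    (ha : Continuous a) (hb : Continuous b)
    (hapos : ∀ x ∈ closure Ω, 0 < a x) (hbpos : ∀ x ∈ closure Ω, 0 < b x)
    (γ₀ : ℝ) (haγ : a x₀ = γ₀) (hbγ : b x₀ = γ₀)
    (hamin : ∀ x ∈ closure Ω, γ₀ ≤ a x) (hbmin : ∀ x ∈ closure Ω, γ₀ ≤ b x)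
    (k l A B : ℝ) (hA : 0 < A) (hB : 0 < B)
    (hk : k = 2) (hl : l = 2)
    (hexpa : Tendsto (fun x => (a x - a x₀ - A * ‖x - x₀‖ ^ k) / ‖x - x₀‖ ^ k)
      (𝓝[≠] x₀) (𝓝 0))
    (hexpb : Tendsto (fun x => (b x - b x₀ - B * ‖x - x₀‖ ^ l) / ‖x - x₀‖ ^ l)
      (𝓝[≠] x₀) (𝓝 0))
    (q : ℝ) (hq : q = 2 * (N : ℝ) / ((N : ℝ) - 2))
    (K₁ K₂ S : ℝ)
    (hK₁ : K₁ = ((N : ℝ) - 2) ^ 2 *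
      ∫ y : EuclideanSpace ℝ (Fin N), ‖y‖ ^ 2 * (1 + ‖y‖ ^ 2) ^ (-(N : ℝ)))
    (hK₂ : K₂ = (∫ y : EuclideanSpace ℝ (Fin N), (1 + ‖y‖ ^ 2) ^ (-(N : ℝ)))
      ^ (((N : ℝ) - 2) / (N : ℝ)))
    (hS : S = K₁ / K₂)
    (lam : ℝ) (hlam : (N : ℝ) * ((N : ℝ) - 2) * ((N : ℝ) + 2) / (8 * ((N : ℝ) - 1)) * (A + B) < lam) :
    ∃ u v : EuclideanSpace ℝ (Fin N) → ℝ,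
      ContDiff ℝ (⊤ : ℕ∞) u ∧ HasCompactSupport u ∧ tsupport u ⊆ Ω ∧
      ContDiff ℝ (⊤ : ℕ∞) v ∧ HasCompactSupport v ∧ tsupport v ⊆ Ω ∧
      (∫ x in Ω, |u x| ^ q) ^ (1 / q) = 1 ∧
      (∫ x in Ω, |v x| ^ q) ^ (1 / q) = 1 ∧
      (1 / 2) * (∫ x in Ω, a x * ‖fderiv ℝ u x‖ ^ 2)
        + (1 / 2) * (∫ x in Ω, b x * ‖fderiv ℝ v x‖ ^ 2)
        - lam * ∫ x in Ω, u x * v x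
      < γ₀ * S := by
  subst hk hl
  simp only [rpow_two] at hexpa hexpb
  have hdim : Module.finrank ℝ (EuclideanSpace ℝ (Fin N)) = N := finrank_euclideanSpace_fin
  have hsob : sobolevConstant (volume : Measure (EuclideanSpace ℝ (Fin N))) = S := by
    simp only [hS, hK₁, hK₂, sobolevConstant, bubbleMoment, hdim, pow_zero, one_mul]
  have hγ : (a x₀ + b x₀) / 2 = γ₀ := by rw [haγ, hbγ, add_self_div_two]
  obtain ⟨u, hu, hcompact, hsupp, hmass, henergy⟩ := stmt_4_general (q := q) volume
    (by rwa [hdim]) (hΩo.mem_nhds hx₀) ha.aestronglyMeasurable hb.aestronglyMeasurable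
    (hasRadialExpansionAt_of_tendsto two_ne_zero hexpa)
    (hasRadialExpansionAt_of_tendsto two_ne_zero hexpb) (by rwa [hdim]) (by rwa [hdim])
  rw [hγ, hsob] at henergy
  exact ⟨u, u, hu, hcompact, hsupp, hu, hcompact, hsupp, hmass, hmass, henergy⟩
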